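/- Let r, ℓ ≥ 4 be integers, let F₁ be a graph and let K be a copy of K_r (a complete graph on r vertices) such that |V(K) ∩ V(F₁)| ≥ 2 and K is not a subgraph of F₁. Then λ(F₁ ∪ K) − λ(F₁) = β_{r,ℓ}(F₁ ∩ K), and consequently λ(F₁ ∪ K) < λ(F₁). Here F₁ ∩ K is the graph with vertex set V(F₁) ∩ V(K) and edge set E(F₁) ∩ E(K), and F₁ ∪ K is defined analogously. -/

import Mathlib

/-!
Since `F₁ ∪ K` and `F₁ ∩ K` have vertex and edge sets `V(F₁) ∪ V(K)`, `E(F₁) ∪ E(K)` and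
`V(F₁) ∩ V(K)`, `E(F₁) ∩ E(K)`, the identity is inclusion–exclusion together with `v(K) = r` and
`e(K) = r(r-1)/2`.

For the inequality write `M = m₂(K_r, C_ℓ)`, and let `J = F₁ ∩ K` have `j ≥ 2` vertices and
`e ≤ j(j-1)/2` edges. If `j < r`, then `r(r-1)/2 - e ≥ (r-j)(r+j-1)/2 ≥ (r-j)(r+1)/2`, so
`β(J) < 0` as soon as `0 < M < (r+1)/2`. If `j = r`, then `e < r(r-1)/2` because `K ⊄ F₁`, and
`M > 0` suffices.

The exact value of `M` is not needed. A subgraph of `C_ℓ` has at most as many edges as vertices,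
so `0 < m₂(C_ℓ) ≤ 2` and `1 / m₂(C_ℓ) ≥ 1/2`; the bound on `M` follows from
`v(v-1)/2 < (r+1)/2 · (v - 2 + 1/2)`, valid for all `2 ≤ v ≤ r` when `r ≥ 4`.
-/

open SimpleGraph

/-- The 2-density `m₂(F)` of a finite graph `F`. -/
noncomputable def m2 {V : Type*} [Fintype V] (F : SimpleGraph V) : ℝ :=
  sSup {x : ℝ | ∃ J : F.Subgraph, 3 ≤ J.verts.ncard ∧
    x = ((J.edgeSet.ncard : ℝ) - 1) / ((J.verts.ncard : ℝ) - 2)}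

/-- The asymmetric 2-density `m₂(F, H)`. -/
noncomputable def m2pair {V W : Type*} [Fintype V] [Fintype W]
    (F : SimpleGraph V) (H : SimpleGraph W) : ℝ :=
  sSup {x : ℝ | ∃ J : F.Subgraph, 1 ≤ J.edgeSet.ncard ∧
    x = (J.edgeSet.ncard : ℝ) / ((J.verts.ncard : ℝ) - 2 + 1 / m2 H)}

/-- `β_{r,ℓ}(J) = r - v(J) - (C(r,2) - e(J)) / m₂(K_r, C_ℓ)`, where `C(r,2) = r(r-1)/2`. -/
noncomputable def beta (r ℓ : ℕ) {V : Type*} {G : SimpleGraph V} (J : G.Subgraph) : ℝ :=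
  (r : ℝ) - (J.verts.ncard : ℝ) -
    ((r : ℝ) * ((r : ℝ) - 1) / 2 - (J.edgeSet.ncard : ℝ)) /
      m2pair (⊤ : SimpleGraph (Fin r)) (cycleGraph ℓ)

/-- `λ(A) = v(A) - e(A)/m₂(K_r, C_ℓ)` for a (sub)graph `A`. -/
noncomputable def lamSub (r ℓ : ℕ) {V : Type*} {G : SimpleGraph V} (A : G.Subgraph) : ℝ :=
  (A.verts.ncard : ℝ) -
    (A.edgeSet.ncard : ℝ) / m2pair (⊤ : SimpleGraph (Fin r)) (cycleGraph ℓ)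

lemma ncard_edgeSet_coe {V : Type*} {G : SimpleGraph V} (J : G.Subgraph) :
    J.coe.edgeSet.ncard = J.edgeSet.ncard := by
  rw [← Subgraph.image_coe_edgeSet_coe J]
  exact (Set.ncard_image_of_injective _ (Sym2.map.injective Subtype.val_injective)).symm

lemma ncard_edgeSet_le_choose {V : Type*} [Fintype V] {G : SimpleGraph V} (J : G.Subgraph) :
    (J.edgeSet.ncard : ℝ) ≤ (J.verts.ncard : ℝ) * ((J.verts.ncard : ℝ) - 1) / 2 := by
  classical
  have h := J.coe.card_edgeFinset_le_card_choose_two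
  rw [← Set.ncard_coe_finset, coe_edgeFinset, ncard_edgeSet_coe, ← Nat.card_eq_fintype_card,
    Nat.card_coe_set_eq] at h
  rw [← Nat.cast_choose_two]
  exact_mod_cast h

lemma two_le_ncard_verts {V : Type*} [Fintype V] {G : SimpleGraph V} (J : G.Subgraph)
    (h : 1 ≤ J.edgeSet.ncard) : 2 ≤ J.verts.ncard := by
  have h1 := ncard_edgeSet_le_choose J
  have h2 : (1 : ℝ) ≤ J.edgeSet.ncard := by exact_mod_cast h
  by_contra! hlt
  interval_cases J.verts.ncard <;> norm_num at h1 <;> linarith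

lemma ncard_verts_le {V : Type*} [Fintype V] {G : SimpleGraph V} (J : G.Subgraph) :
    J.verts.ncard ≤ Fintype.card V := by
  rw [← Nat.card_eq_fintype_card]
  exact Set.ncard_le_card _

/-- Every vertex of a cycle has degree `2`, so the degree sum of a subgraph `J` is at most
`2 v(J)`. -/
lemma ncard_edgeSet_le_of_cycle {ℓ : ℕ} (hℓ : 4 ≤ ℓ) (J : (cycleGraph ℓ).Subgraph) :
    J.edgeSet.ncard ≤ J.verts.ncard := by
  classical
  obtain ⟨n, rfl⟩ : ∃ n, ℓ = n + 3 := ⟨ℓ - 3, by omega⟩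
  have h := J.coe.sum_degrees_eq_twice_card_edges
  have h2 : 2 * J.coe.edgeFinset.card ≤ ∑ _v : J.verts, 2 := by
    rw [← h]
    refine Finset.sum_le_sum fun v _ => ?_
    rw [Subgraph.coe_degree]
    exact (J.degree_le v).trans cycleGraph_degree_three_le.le
  rw [← Set.ncard_coe_finset, coe_edgeFinset, ncard_edgeSet_coe, Finset.sum_const,
    Finset.card_univ, ← Nat.card_eq_fintype_card, Nat.card_coe_set_eq, smul_eq_mul] at h2
  omega

lemma two_le_ncard_edgeSet_cycle {ℓ : ℕ} (hℓ : 4 ≤ ℓ) :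
    2 ≤ (⊤ : (cycleGraph ℓ).Subgraph).edgeSet.ncard := by
  classical
  obtain ⟨n, rfl⟩ : ∃ n, ℓ = n + 3 := ⟨ℓ - 3, by omega⟩
  have h := (cycleGraph (n + 3)).sum_degrees_eq_twice_card_edges
  simp only [cycleGraph_degree_three_le, Finset.sum_const, Finset.card_univ, Fintype.card_fin,
    smul_eq_mul] at h
  rw [Subgraph.edgeSet_top, ← coe_edgeFinset, Set.ncard_coe_finset]
  omega

lemma m2_cycle_bounds {ℓ : ℕ} (hℓ : 4 ≤ ℓ) :
    0 < m2 (cycleGraph ℓ) ∧ m2 (cycleGraph ℓ) ≤ 2 := by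
  have hub : ∀ x ∈ {x : ℝ | ∃ J : (cycleGraph ℓ).Subgraph, 3 ≤ J.verts.ncard ∧
      x = ((J.edgeSet.ncard : ℝ) - 1) / ((J.verts.ncard : ℝ) - 2)}, x ≤ 2 := by
    rintro x ⟨J, hJ, rfl⟩
    have h1 : (J.edgeSet.ncard : ℝ) ≤ J.verts.ncard := by
      exact_mod_cast ncard_edgeSet_le_of_cycle hℓ J
    have h2 : (3 : ℝ) ≤ J.verts.ncard := by exact_mod_cast hJ
    rw [div_le_iff₀ (by linarith)]
    linarith
  have hv : (⊤ : (cycleGraph ℓ).Subgraph).verts.ncard = ℓ := by simp [Set.ncard_univ]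
  have he : (2 : ℝ) ≤ (⊤ : (cycleGraph ℓ).Subgraph).edgeSet.ncard := by
    exact_mod_cast two_le_ncard_edgeSet_cycle hℓ
  have hl : (4 : ℝ) ≤ ℓ := by exact_mod_cast hℓ
  refine ⟨?_, csSup_le ⟨_, ⊤, by omega, rfl⟩ hub⟩
  refine lt_of_lt_of_le ?_ (le_csSup ⟨2, hub⟩ ⟨⊤, by omega, rfl⟩)
  rw [hv]
  exact div_pos (by linarith) (by linarith)

/-- `0 < m₂(K_r, C_ℓ) < (r+1)/2`. The set in the definition of `m2pair` is finite, so its supremum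
is attained by some `J`, to which the count `e(J) ≤ v(J)(v(J)-1)/2` applies. -/
lemma m2pair_bounds {r ℓ : ℕ} (hr : 4 ≤ r) (hℓ : 4 ≤ ℓ) :
    0 < m2pair (⊤ : SimpleGraph (Fin r)) (cycleGraph ℓ) ∧
      m2pair (⊤ : SimpleGraph (Fin r)) (cycleGraph ℓ) < ((r : ℝ) + 1) / 2 := by
  classical
  obtain ⟨hm0, hm2⟩ := m2_cycle_bounds hℓ
  have hc : 1 / 2 ≤ 1 / m2 (cycleGraph ℓ) := one_div_le_one_div_of_le hm0 hm2
  set S := {x : ℝ | ∃ J : (⊤ : SimpleGraph (Fin r)).Subgraph, 1 ≤ J.edgeSet.ncard ∧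
    x = (J.edgeSet.ncard : ℝ) / ((J.verts.ncard : ℝ) - 2 + 1 / m2 (cycleGraph ℓ))} with hS
  have hfin : S.Finite := by
    refine (Set.finite_range fun J : (⊤ : SimpleGraph (Fin r)).Subgraph =>
      (J.edgeSet.ncard : ℝ) / ((J.verts.ncard : ℝ) - 2 + 1 / m2 (cycleGraph ℓ))).subset ?_
    rintro x ⟨J, -, rfl⟩
    exact ⟨J, rfl⟩
  have hne : S.Nonempty := by
    refine ⟨_, ⊤, ?_, rfl⟩
    rw [Nat.one_le_iff_ne_zero, ← Nat.pos_iff_ne_zero, Set.ncard_pos (Set.toFinite _)]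
    refine ⟨s(⟨0, by omega⟩, ⟨1, by omega⟩), ?_⟩
    simp
  obtain ⟨J, hJ, hx⟩ := hne.csSup_mem hfin
  change m2pair _ _ = _ at hx
  rw [hx]
  have he := ncard_edgeSet_le_choose J
  have he1 : (1 : ℝ) ≤ J.edgeSet.ncard := by exact_mod_cast hJ
  have hv2 : (2 : ℝ) ≤ J.verts.ncard := by exact_mod_cast two_le_ncard_verts J hJ
  have hvr : (J.verts.ncard : ℝ) ≤ r := by
    exact_mod_cast (ncard_verts_le J).trans_eq (Fintype.card_fin r)
  have hr' : (4 : ℝ) ≤ r := by exact_mod_cast hr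
  have hpos : 0 < (J.verts.ncard : ℝ) - 2 + 1 / m2 (cycleGraph ℓ) := by linarith
  refine ⟨div_pos (by linarith) hpos, ?_⟩
  rw [div_lt_iff₀ hpos]
  generalize (J.verts.ncard : ℝ) = v at *
  generalize 1 / m2 (cycleGraph ℓ) = c at *
  -- The two lower bounds `r ≥ v` and `r ≥ 4` are needed for large and for small `v` respectively.
  have key : v * (v - 1) < (r + 1) * (v - 2 + 1 / 2) := by
    rcases le_total v (7 / 2) with h | h
    · nlinarith
    · nlinarith
  nlinarith

/-- **Lemma.** Let `r, ℓ ≥ 4`, let `F₁` be a graph and `K` a copy of `K_r` with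
`|V(K) ∩ V(F₁)| ≥ 2` such that `K` is not a subgraph of `F₁`. Then
`λ(F₁ ∪ K) - λ(F₁) = β_{r,ℓ}(F₁ ∩ K)`, and consequently `λ(F₁ ∪ K) < λ(F₁)`.
Here `F₁` and `K` are realised as subgraphs of a common complete ambient graph, and
`F₁ ∩ K` (resp. `F₁ ∪ K`) has vertex set `V(F₁) ∩ V(K)` (resp. `V(F₁) ∪ V(K)`) and
edge set `E(F₁) ∩ E(K)` (resp. `E(F₁) ∪ E(K)`). -/
theorem lambda_add_clique (r ℓ : ℕ) (hr : 4 ≤ r) (hℓ : 4 ≤ ℓ)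
    {V : Type*} [Fintype V] (F₁ K : (⊤ : SimpleGraph V).Subgraph)
    (hK : Nonempty (K.coe ≃g (⊤ : SimpleGraph (Fin r))))
    (hint : 2 ≤ (K.verts ∩ F₁.verts).ncard) (hns : ¬ K ≤ F₁) :
    lamSub r ℓ (F₁ ⊔ K) - lamSub r ℓ F₁ = beta r ℓ (F₁ ⊓ K) ∧
    lamSub r ℓ (F₁ ⊔ K) < lamSub r ℓ F₁ := by
  classical
  obtain ⟨φ⟩ := hK
  have hKv : K.verts.ncard = r := by
    rw [← Nat.card_coe_set_eq, Nat.card_congr φ.toEquiv, Nat.card_fin]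
  have hKe : (K.edgeSet.ncard : ℝ) = (r : ℝ) * ((r : ℝ) - 1) / 2 := by
    rw [← ncard_edgeSet_coe, ← Nat.card_coe_set_eq, Nat.card_congr φ.mapEdgeSet,
      Nat.card_eq_fintype_card, ← edgeFinset_card, card_edgeFinset_top_eq_card_choose_two,
      Fintype.card_fin, Nat.cast_choose_two]
  obtain ⟨hM0, hM⟩ := m2pair_bounds hr hℓ
  have hvert : ((F₁ ⊔ K).verts.ncard : ℝ) + ((F₁ ⊓ K).verts.ncard : ℝ) = F₁.verts.ncard + r := by
    rw [← hKv]
    exact_mod_cast Set.ncard_union_add_ncard_inter F₁.verts K.verts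
  have hedge : ((F₁ ⊔ K).edgeSet.ncard : ℝ) + ((F₁ ⊓ K).edgeSet.ncard : ℝ) =
      F₁.edgeSet.ncard + (r : ℝ) * ((r : ℝ) - 1) / 2 := by
    rw [← hKe, Subgraph.edgeSet_sup, Subgraph.edgeSet_inf]
    exact_mod_cast Set.ncard_union_add_ncard_inter F₁.edgeSet K.edgeSet
  have heq : lamSub r ℓ (F₁ ⊔ K) - lamSub r ℓ F₁ = beta r ℓ (F₁ ⊓ K) := by
    unfold lamSub beta
    rw [eq_sub_of_add_eq hvert, eq_sub_of_add_eq hedge]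
    ring
  refine ⟨heq, ?_⟩
  rw [← sub_neg, heq]
  unfold beta
  generalize m2pair (⊤ : SimpleGraph (Fin r)) (cycleGraph ℓ) = M at *
  rw [sub_neg, lt_div_iff₀ hM0]
  have hj2 : (2 : ℝ) ≤ (F₁ ⊓ K).verts.ncard := by
    rw [Subgraph.verts_inf, Set.inter_comm]
    exact_mod_cast hint
  have hle : (F₁ ⊓ K).verts.ncard ≤ r := hKv ▸ Set.ncard_le_ncard Set.inter_subset_right
  rcases hle.lt_or_eq with hlt | hjr
  · have he := ncard_edgeSet_le_choose (F₁ ⊓ K)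
    have hlt' : ((F₁ ⊓ K).verts.ncard : ℝ) < r := by exact_mod_cast hlt
    generalize ((F₁ ⊓ K).verts.ncard : ℝ) = j at *
    have h1 : (r - j) * M < (r - j) * ((r + 1) / 2) := mul_lt_mul_of_pos_left hM (by linarith)
    nlinarith
  · have hlt : (F₁ ⊓ K).edgeSet.ncard < K.edgeSet.ncard := by
      refine Set.ncard_lt_ncard ?_
      refine (Subgraph.edgeSet_mono inf_le_right).ssubset_of_ne fun heqE => hns ?_
      have hverts : F₁.verts ∩ K.verts = K.verts :=
        Set.eq_of_subset_of_ncard_le Set.inter_subset_right (by rw [hKv]; exact hjr.ge)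
      refine ⟨Set.inter_eq_right.mp hverts, fun a b hab => ?_⟩
      have : s(a, b) ∈ (F₁ ⊓ K).edgeSet := heqE ▸ hab
      exact (Subgraph.mem_edgeSet.mp this).1
    have hlt' : ((F₁ ⊓ K).edgeSet.ncard : ℝ) < K.edgeSet.ncard := by exact_mod_cast hlt
    rw [hjr]
    linarith
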